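/- Monotonic Path Property: let s be a nonempty string and let k be the longest canonical token that is a suffix of s (k exists, since the single-character token formed by the last character of s is canonical). Then a node t of SufSucTree(k) satisfies the Prefix Last-Token Condition with respect to s if and only if t lies on the ancestor path P(θ(s)) from the last token θ(s) to the root of SufSucTree(k). -/

import Mathlib

/-!
Common BPE formalization preamble.

A token is a (nonempty) string over the alphabet `α`, modeled as `List α`.
A merge rule is a pair of tokens; a dictionary is an ordered list of rules
(earlier rules have strictly higher priority).
-/

namespace BPE

variable {α : Type*} [DecidableEq α]

/-- A token is a string over the alphabet (nonemptiness is imposed by hypotheses). -/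
abbrev Token (α : Type*) := List α

/-- A merge rule is an ordered pair of tokens. -/
abbrev Rule (α : Type*) := Token α × Token α

/-- A dictionary is an ordered list of merge rules; earlier = higher priority. -/
abbrev Dict (α : Type*) := List (Rule α)

/-- Apply a single merge rule to a token list, scanning left to right and replacing
each adjacent occurrence of `r.1` followed by `r.2` by the concatenated token,
resuming the scan after the newly formed token (no overlaps). -/
def applyRule (r : Rule α) : List (Token α) → List (Token α)
  | [] => []
  | [t] => [t]
  | t :: u :: rest =>
      if t = r.1 ∧ u = r.2 then (r.1 ++ r.2) :: applyRule r rest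
      else t :: applyRule r (u :: rest)

/-- `φ₀(s)`: the list of single-character tokens of `s`. -/
def phi0 (s : List α) : List (Token α) := s.map (fun c => [c])

/-- `φ_k(s)`: the token list after applying the first `k` rules of `D` to `s`. -/
def phiK (D : Dict α) (k : ℕ) (s : List α) : List (Token α) :=
  (D.take k).foldl (fun φ r => applyRule r φ) (phi0 s)

/-- The BPE tokenization `𝕋_D(s)`. -/
def tokenize (D : Dict α) (s : List α) : List (Token α) :=
  phiK D D.length s

/-- Detokenization `π`: concatenation of the tokens. -/
def detok (φ : List (Token α)) : List α := φ.flatten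

/-- A dictionary is valid if all rule components are genuine (nonempty) tokens. -/
def ValidDict (D : Dict α) : Prop := ∀ r ∈ D, r.1 ≠ [] ∧ r.2 ≠ []

/-- A token `t` is canonical if `𝕋_D(t) = [t]`. -/
def IsCanonical (D : Dict α) (t : Token α) : Prop := tokenize D t = [t]

/-- The last token `θ(s)`: last element of `𝕋_D(s)` (defaulting to `[]`). -/
def theta (D : Dict α) (s : List α) : Token α := (tokenize D s).getLastD []

/-- `j` (0-based) is the index of the canonical rule of `t`:
`φ_j(t)` has exactly two tokens and `φ_{j+1}(t) = [t]`. -/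
def IsCanonicalRuleIdx (D : Dict α) (t : Token α) (j : ℕ) : Prop :=
  j < D.length ∧ (phiK D j t).length = 2 ∧ phiK D (j + 1) t = [t]

open Classical in
/-- The (0-based) index of the canonical rule of `t` (junk value `0` if none exists). -/
noncomputable def canonIdx (D : Dict α) (t : Token α) : ℕ :=
  if h : ∃ j, IsCanonicalRuleIdx D t j then h.choose else 0

/-- Predecessor `pre(t)`: first token of the two-token stage `φ_{j-1}(t)`. -/
noncomputable def pre (D : Dict α) (t : Token α) : Token α :=
  (phiK D (canonIdx D t) t).headD []

/-- Successor `suc(t)`: second token of the two-token stage `φ_{j-1}(t)`. -/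
noncomputable def suc (D : Dict α) (t : Token α) : Token α :=
  (phiK D (canonIdx D t) t).getLastD []

/-- `InPath D x a` means `a ∈ P(x)`: `a` is obtained from `x` by iterating `suc`,
i.e. `a` lies on the ancestor path of `x` in the Successor Forest. -/
def InPath (D : Dict α) (x a : Token α) : Prop :=
  ∃ n : ℕ, (suc D)^[n] x = a

/-- `s` with the suffix `u` removed. -/
def dropSuffix (s u : List α) : List α := s.take (s.length - u.length)

/-- The Prefix Last-Token Condition of the canonical suffix token `t`
with respect to the string `s`. Atomic tokens satisfy it by definition;
a non-atomic token must satisfy Reachability and Priority dominance. -/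
def PLTC (D : Dict α) (s t : Token α) : Prop :=
  t.length = 1 ∨
    (1 < t.length ∧
      InPath D (theta D (dropSuffix s (suc D t))) (pre D t) ∧
      (theta D (dropSuffix s (suc D t)) ≠ pre D t →
        ∀ u : Token α, 1 < u.length → IsCanonical D u → suc D u = pre D t →
          InPath D (theta D (dropSuffix s (suc D t))) u →
          canonIdx D t < canonIdx D u))


/-! ### Helper lemmas -/

theorem applyRule_split (r : Rule α) : ∀ (φ A B : List (Token α)), applyRule r φ = A ++ B →
    ∃ φ1 φ2, φ = φ1 ++ φ2 ∧ applyRule r φ1 = A ∧ applyRule r φ2 = B := by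
  intro φ
  induction φ using applyRule.induct r with
  | case1 =>
    intro A B h
    simp only [applyRule] at h
    obtain ⟨rfl, rfl⟩ := List.append_eq_nil_iff.1 h.symm
    exact ⟨[], [], by simp [applyRule]⟩
  | case2 t =>
    intro A B h
    simp only [applyRule] at h
    cases A with
    | nil => exact ⟨[], [t], by simpa [applyRule] using h⟩
    | cons a A' =>
      simp only [List.cons_append, List.cons.injEq] at h
      obtain ⟨rfl, h⟩ := h
      obtain ⟨rfl, rfl⟩ := List.append_eq_nil_iff.1 h.symm
      exact ⟨[t], [], by simp [applyRule]⟩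
  | case3 t u rest hc ih =>
    intro A B h
    rw [applyRule, if_pos hc] at h
    cases A with
    | nil => exact ⟨[], t :: u :: rest, by simp, by simp [applyRule], by
        rw [applyRule, if_pos hc]; simpa using h⟩
    | cons a A' =>
      simp only [List.cons_append, List.cons.injEq] at h
      obtain ⟨rfl, h⟩ := h
      obtain ⟨φ1, φ2, rfl, rfl, rfl⟩ := ih _ _ h
      exact ⟨t :: u :: φ1, φ2, by simp, by rw [applyRule, if_pos hc], rfl⟩
  | case4 t u rest hc ih =>
    intro A B h
    rw [applyRule, if_neg hc] at h
    cases A with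
    | nil => exact ⟨[], t :: u :: rest, by simp, by simp [applyRule], by
        rw [applyRule, if_neg hc]; simpa using h⟩
    | cons a A' =>
      simp only [List.cons_append, List.cons.injEq] at h
      obtain ⟨rfl, h⟩ := h
      obtain ⟨φ1, φ2, he, rfl, rfl⟩ := ih _ _ h
      cases φ1 with
      | nil =>
        refine ⟨[t], φ2, by simpa using he, by simp [applyRule], rfl⟩
      | cons v φ1' =>
        simp only [List.cons_append, List.cons.injEq] at he
        obtain ⟨rfl, rfl⟩ := he
        exact ⟨t :: u :: φ1', φ2, by simp, by rw [applyRule, if_neg hc], rfl⟩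

theorem applyRule_head (r : Rule α) (hr : r.2 ≠ []) (a : Token α) (Q : List (Token α)) :
    ∀ S : List (Token α), applyRule r (S ++ a :: Q) = applyRule r S ++ applyRule r (a :: Q) →
    ∀ Q', applyRule r (S ++ a :: Q') = applyRule r S ++ applyRule r (a :: Q') := by
  intro S
  induction S using applyRule.induct r with
  | case1 => intro _ Q'; simp [applyRule]
  | case2 t =>
    intro h Q'
    simp only [List.cons_append, List.nil_append] at h ⊢
    have h0 : applyRule r [t] = [t] := rfl
    rw [h0] at h ⊢
    by_cases hc : t = r.1 ∧ a = r.2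
    · rw [applyRule.eq_3, if_pos hc] at h
      simp only [List.nil_append, List.cons_append, List.cons.injEq] at h
      have := h.1
      rw [hc.1] at this
      simp at this
      exact absurd this hr
    · rw [applyRule.eq_3, if_neg hc]; rfl
  | case3 t u rest hc ih =>
    intro h Q'
    simp only [List.cons_append, applyRule, if_pos hc, List.cons.injEq, true_and] at h ⊢
    exact ih h Q'
  | case4 t u rest hc ih =>
    intro h Q'
    simp only [List.cons_append, applyRule, if_neg hc, List.cons.injEq, true_and] at h ih ⊢
    exact ih h Q'

theorem applyRule_flatten (r : Rule α) (φ : List (Token α)) :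
    (applyRule r φ).flatten = φ.flatten := by
  induction φ using applyRule.induct r with
  | case1 => simp [applyRule]
  | case2 t => simp [applyRule]
  | case3 t u rest hc ih => 
    rw [applyRule, if_pos hc]
    simp [ih, hc.1, hc.2]
  | case4 t u rest hc ih => 
    rw [applyRule, if_neg hc]
    simp [ih]

theorem applyRule_ne (r : Rule α) (hr : r.2 ≠ []) (φ : List (Token α)) (h : ∀ x ∈ φ, x ≠ []) :
    ∀ x ∈ applyRule r φ, x ≠ [] := by
  induction φ using applyRule.induct r with
  | case1 => simp [applyRule]
  | case2 t => simpa [applyRule] using h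
  | case3 t u rest hc ih => 
    rw [applyRule, if_pos hc]
    intro x hx
    rcases List.mem_cons.1 hx with rfl | hx
    · simp [hr]
    · exact ih (fun y hy => h y (by simp [hy])) x hx
  | case4 t u rest hc ih => 
    rw [applyRule, if_neg hc]
    intro x hx
    rcases List.mem_cons.1 hx with rfl | hx
    · exact h _ (by simp)
    · exact ih (fun y hy => h y (by simp at hy ⊢; tauto)) x hx

theorem applyRule_length (r : Rule α) (φ : List (Token α)) :
    φ.length ≤ 2 * (applyRule r φ).length ∧ (applyRule r φ).length ≤ φ.length := by
  induction φ using applyRule.induct r with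
  | case1 => simp [applyRule]
  | case2 t => simp [applyRule]
  | case3 t u rest hc ih => 
    rw [applyRule, if_pos hc]
    simp only [List.length_cons]; omega
  | case4 t u rest hc ih => 
    rw [applyRule, if_neg hc]
    simp only [List.length_cons] at ih ⊢; omega

theorem phiK_succ (D : Dict α) (i : ℕ) :
    (∃ r ∈ D, ∀ s, phiK D (i+1) s = applyRule r (phiK D i s)) ∨
    (∀ s, phiK D (i+1) s = phiK D i s) := by
  by_cases h : i < D.length
  · left
    refine ⟨D[i], List.getElem_mem h, fun s => ?_⟩
    simp only [phiK, List.take_succ_eq_append_getElem h, List.foldl_append, List.foldl_cons,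
      List.foldl_nil]
  · right
    intro s
    simp only [phiK]
    rw [List.take_of_length_le (by omega), List.take_of_length_le (by omega)]

theorem phiK_zero (D : Dict α) (s : List α) : phiK D 0 s = phi0 s := by simp [phiK]

theorem phiK_flatten (D : Dict α) (i : ℕ) (s : List α) : (phiK D i s).flatten = s := by
  induction i with
  | zero =>
    rw [phiK_zero, phi0]
    induction s with
    | nil => rfl
    | cons a s ih => simp [ih]
  | succ i ih =>
    rcases phiK_succ D i with ⟨r, _, h⟩ | h
    · rw [h, applyRule_flatten, ih]
    · rw [h, ih]

theorem phiK_ne (D : Dict α) (hD : ValidDict D) (i : ℕ) (s : List α) :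
    ∀ x ∈ phiK D i s, x ≠ [] := by
  induction i with
  | zero => rw [phiK_zero, phi0]; simp
  | succ i ih =>
    rcases phiK_succ D i with ⟨r, hr, h⟩ | h
    · rw [h]; exact applyRule_ne r (hD r hr).2 _ ih
    · rw [h]; exact ih

theorem phiK_ne_nil (D : Dict α) (i : ℕ) (s : List α) (hs : s ≠ []) : phiK D i s ≠ [] := by
  intro h
  have := phiK_flatten D i s
  rw [h] at this
  exact hs this.symm

theorem phiK_split (D : Dict α) (i : ℕ) : ∀ (s : List α) (A B : List (Token α)),
    phiK D i s = A ++ B → ∃ a b, s = a ++ b ∧ phiK D i a = A ∧ phiK D i b = B ∧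
      ∀ j ≤ i, phiK D j s = phiK D j a ++ phiK D j b := by
  induction i with
  | zero =>
    intro s A B h
    simp only [phiK_zero, phi0] at h ⊢
    obtain ⟨a, b, rfl, rfl, rfl⟩ := List.map_eq_append_iff.1 h
    refine ⟨a, b, rfl, rfl, rfl, ?_⟩
    intro j hj
    obtain rfl : j = 0 := by omega
    simp [phiK_zero, phi0]
  | succ i ih =>
    intro s A B h
    have key : ∃ a b, s = a ++ b ∧ phiK D (i+1) a = A ∧ phiK D (i+1) b = B ∧
      ∀ j ≤ i, phiK D j s = phiK D j a ++ phiK D j b := by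
      rcases phiK_succ D i with ⟨r, _, hr⟩ | hr
      · rw [hr] at h
        obtain ⟨φ1, φ2, h1, rfl, rfl⟩ := applyRule_split r _ _ _ h
        obtain ⟨a, b, rfl, rfl, rfl, h4⟩ := ih _ _ _ h1
        exact ⟨a, b, rfl, hr _, hr _, h4⟩
      · rw [hr] at h
        obtain ⟨a, b, rfl, rfl, rfl, h4⟩ := ih _ _ _ h
        exact ⟨a, b, rfl, hr _, hr _, h4⟩
    obtain ⟨a, b, h1, h2, h3, h4⟩ := key
    refine ⟨a, b, h1, h2, h3, fun j hj => ?_⟩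
    rcases Nat.lt_or_ge i j with h5 | h5
    · obtain rfl : j = i + 1 := by omega
      rw [h, h2, h3]
    · exact h4 j h5

theorem phiK_single (D : Dict α) (i : ℕ) (b t : Token α) (h : phiK D i b = [t]) : b = t := by
  have := phiK_flatten D i b
  rw [h] at this; simpa using this.symm

/-- Splitting off the last token. -/
theorem phiK_split_last (D : Dict α) (i : ℕ) (s : List α) (A : List (Token α)) (t : Token α)
    (h : phiK D i s = A ++ [t]) : ∃ p, s = p ++ t ∧ phiK D i p = A ∧ phiK D i t = [t] ∧
      ∀ j ≤ i, phiK D j s = phiK D j p ++ phiK D j t := by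
  obtain ⟨a, b, h1, h2, h3, h4⟩ := phiK_split D i s A [t] h
  obtain rfl := phiK_single D i b t h3
  exact ⟨a, h1, h2, h3, h4⟩

theorem phiK_stab (D : Dict α) (t : Token α) (i j : ℕ) (hij : i ≤ j) (h : phiK D i t = [t]) :
    phiK D j t = [t] := by
  induction j, hij using Nat.le_induction with
  | base => exact h
  | succ j _ ih =>
    rcases phiK_succ D j with ⟨r, _, hr⟩ | hr
    · rw [hr, ih]; rfl
    · rw [hr, ih]

theorem phiK_ge (D : Dict α) (j : ℕ) (h : D.length ≤ j) (s : List α) :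
    phiK D j s = phiK D D.length s := by
  simp only [phiK]
  rw [List.take_of_length_le h, List.take_of_length_le le_rfl]

theorem canonical_of (D : Dict α) (t : Token α) (i : ℕ) (h : phiK D i t = [t]) :
    IsCanonical D t := by
  have h2 := phiK_stab D t i (max i D.length) (le_max_left _ _) h
  rw [phiK_ge D _ (le_max_right _ _)] at h2
  exact h2

theorem canonical_ne (D : Dict α) (hD : ValidDict D) (t : Token α) (h : IsCanonical D t) :
    t ≠ [] := phiK_ne D hD D.length t t (by
      have : phiK D D.length t = [t] := h
      rw [this]; simp)

theorem exists_idx (D : Dict α) (t : Token α) (h : IsCanonical D t)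
    (hl : 1 < t.length) : ∃ j, IsCanonicalRuleIdx D t j := by
  have hex : ∃ j, phiK D j t = [t] := ⟨_, h⟩
  classical
  have hsp := Nat.find_spec hex
  have hmin := @Nat.find_min _ _ hex
  have hle : Nat.find hex ≤ D.length := Nat.find_min' hex h
  generalize Nat.find hex = n at *
  cases n with
  | zero =>
    rw [phiK_zero] at hsp
    have := congrArg List.length hsp
    simp [phi0] at this; omega
  | succ j =>
    refine ⟨j, by omega, ?_, hsp⟩
    have hj := hmin (m := j) (by omega)
    rcases phiK_succ D j with ⟨r, _, hr⟩ | hr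
    · have h1 := applyRule_length r (phiK D j t)
      rw [← hr, hsp] at h1
      simp only [List.length_singleton] at h1
      have h2 : (phiK D j t).length ≠ 1 := by
        intro h2
        obtain ⟨x, hx⟩ := List.length_eq_one_iff.1 h2
        have := phiK_single D j t x hx
        subst this
        exact hj hx
      omega
    · rw [hr] at hsp; exact absurd hsp hj

theorem canonIdx_spec (D : Dict α) (t : Token α) (h : IsCanonical D t)
    (hl : 1 < t.length) : IsCanonicalRuleIdx D t (canonIdx D t) := by
  have := exists_idx D t h hl
  rw [canonIdx, dif_pos this]
  exact this.choose_spec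

theorem canon_facts (D : Dict α) (hD : ValidDict D) (t : Token α) (h : IsCanonical D t)
    (hl : 1 < t.length) : phiK D (canonIdx D t) t = [pre D t, suc D t] ∧
      phiK D (canonIdx D t + 1) t = [t] ∧ t = pre D t ++ suc D t ∧
      phiK D (canonIdx D t) (pre D t) = [pre D t] ∧ phiK D (canonIdx D t) (suc D t) = [suc D t] ∧
      (∀ j ≤ canonIdx D t, phiK D j t = phiK D j (pre D t) ++ phiK D j (suc D t)) ∧
      pre D t ≠ [] ∧ suc D t ≠ [] := by
  obtain ⟨h1, h2, h3⟩ := canonIdx_spec D t h hl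
  obtain ⟨x, y, hxy⟩ := List.length_eq_two.1 h2
  have hp : pre D t = x := by simp [pre, hxy]
  have hs : suc D t = y := by simp [suc, hxy]
  have hne := phiK_ne D hD (canonIdx D t) t
  rw [hxy] at hne
  rw [hp, hs]
  obtain ⟨p, e1, e2, e3, e4⟩ := phiK_split_last D _ t [x] y hxy
  obtain rfl := phiK_single D _ p x e2
  exact ⟨hxy, h3, e1, e2, e3, e4, hne _ (by simp), hne _ (by simp)⟩

theorem suc_atomic (D : Dict α) (hD : ValidDict D) (t : Token α) (hl : t.length ≤ 1) :
    suc D t = t := by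
  have hno : ¬ ∃ j, IsCanonicalRuleIdx D t j := by
    rintro ⟨j, _, h2, _⟩
    obtain ⟨x, y, hxy⟩ := List.length_eq_two.1 h2
    have hne := phiK_ne D hD j t
    have hf := phiK_flatten D j t
    rw [hxy] at hne hf
    have hx := List.length_pos_iff.2 (hne x (by simp))
    have hy := List.length_pos_iff.2 (hne y (by simp))
    have := congrArg List.length hf
    simp at this
    omega
  rw [suc, canonIdx, dif_neg hno, phiK_zero, phi0]
  match t, hl with
  | [], _ => rfl
  | [a], _ => rfl

theorem suc_canonical (D : Dict α) (hD : ValidDict D) (t : Token α) (h : IsCanonical D t) :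
    IsCanonical D (suc D t) := by
  by_cases hl : 1 < t.length
  · exact canonical_of D _ _ (canon_facts D hD t h hl).2.2.2.2.1
  · rw [suc_atomic D hD t (by omega)]; exact h

/-- `v` is the last token of `φ_i(x)`. -/
def LT (D : Dict α) (i : ℕ) (x v : Token α) : Prop := ∃ A, phiK D i x = A ++ [v]

theorem LT_append (D : Dict α) (i : ℕ) (s a b v : Token α) (hb : b ≠ [])
    (h : phiK D i s = phiK D i a ++ phiK D i b) : LT D i s v ↔ LT D i b v := by
  have hne := phiK_ne_nil D i b hb
  constructor
  · rintro ⟨A, hA⟩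
    rcases List.eq_nil_or_concat (phiK D i b) with h0 | ⟨L, w, hw⟩
    · exact absurd h0 hne
    · rw [List.concat_eq_append] at hw
      rw [hA, hw, ← List.append_assoc] at h
      obtain ⟨_, h2⟩ := List.append_inj' h rfl
      simp only [List.cons.injEq, and_true] at h2
      subst h2
      exact ⟨L, hw⟩
  · rintro ⟨A, hA⟩
    exact ⟨phiK D i a ++ A, by rw [h, hA, List.append_assoc]⟩

theorem LT_self (D : Dict α) (i : ℕ) (t : Token α) (h : phiK D i t = [t]) : LT D i t t :=
  ⟨[], by simpa using h⟩

theorem LT_unique (D : Dict α) (i : ℕ) (t v w : Token α) (h : LT D i t v) (h' : LT D i t w) :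
    v = w := by
  obtain ⟨A, hA⟩ := h
  obtain ⟨B, hB⟩ := h'
  rw [hA] at hB
  simpa using (List.append_inj' hB rfl).2

theorem LT_mono (D : Dict α) (hD : ValidDict D) (i j : ℕ) (hij : i ≤ j) (x v w : Token α)
    (h : LT D i x v) (h' : LT D j x w) : v.length ≤ w.length := by
  obtain ⟨B, hB⟩ := h'
  obtain ⟨p, e1, e2, e3, e4⟩ := phiK_split_last D j x B w hB
  have hw : w ≠ [] := phiK_ne D hD j w w (by rw [e3]; simp)
  obtain ⟨A, hA⟩ := (LT_append D i x p w v hw (e4 i hij)).1 h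
  have := congrArg List.length (phiK_flatten D i w)
  rw [hA] at this
  simp at this
  omega

theorem theta_spec (D : Dict α) (hD : ValidDict D) (s : List α) (hs : s ≠ []) :
    IsCanonical D (theta D s) ∧ ∀ i v, i ≤ D.length → (LT D i s v ↔ LT D i (theta D s) v) := by
  rcases List.eq_nil_or_concat (phiK D D.length s) with h0 | ⟨L, w, hw⟩
  · exact absurd h0 (phiK_ne_nil D _ s hs)
  · rw [List.concat_eq_append] at hw
    have ht : theta D s = w := by
      rw [theta, tokenize, hw]; simp
    rw [ht]
    obtain ⟨p, e1, e2, e3, e4⟩ := phiK_split_last D _ s L w hw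
    have hc : IsCanonical D w := canonical_of D w _ e3
    exact ⟨hc, fun i v hi => LT_append D i s p w v (canonical_ne D hD w hc) (e4 i hi)⟩

theorem LT_atomic (D : Dict α) (i : ℕ) (x : Token α) (hl : x.length = 1) : phiK D i x = [x] := by
  refine phiK_stab D x 0 i (by omega) ?_
  rw [phiK_zero, phi0]
  obtain ⟨a, rfl⟩ := List.length_eq_one_iff.1 hl
  rfl

theorem inPath_of_LT (D : Dict α) (hD : ValidDict D) (i : ℕ) (v : Token α) :
    ∀ (n : ℕ) (x : Token α), x.length = n → IsCanonical D x → LT D i x v → InPath D x v := by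
  intro n
  induction n using Nat.strong_induction_on with
  | _ n ih =>
    intro x hn hx h
    have hpos := List.length_pos_iff.2 (canonical_ne D hD x hx)
    by_cases hl : 1 < x.length
    · obtain ⟨f1, f2, f3, f4, f5, f6, f7, f8⟩ := canon_facts D hD x hx hl
      by_cases hi : i ≤ canonIdx D x
      · have h2 := (LT_append D i x _ _ v f8 (f6 i hi)).1 h
        have hlt : (suc D x).length < n := by
          have := congrArg List.length f3
          have := List.length_pos_iff.2 f7
          simp at *; omega
        obtain ⟨m, hm⟩ := ih _ hlt (suc D x) rfl (suc_canonical D hD x hx) h2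
        exact ⟨m + 1, hm⟩
      · have := LT_self D i x (phiK_stab D x _ i (by omega) f2)
        exact ⟨0, LT_unique D i x _ _ this h⟩
    · have := LT_self D i x (LT_atomic D i x (by omega))
      exact ⟨0, LT_unique D i x _ _ this h⟩

theorem iter_atomic (D : Dict α) (hD : ValidDict D) (x : Token α) (h : x.length ≤ 1) (n : ℕ) :
    (suc D)^[n] x = x := Function.iterate_fixed (suc_atomic D hD x h) n

theorem path_LT (D : Dict α) (hD : ValidDict D) (u : Token α) (hu : 1 < u.length) (n : ℕ) :
    ∀ x, IsCanonical D x → (suc D)^[n] x = u → canonIdx D u ≤ canonIdx D x ∧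
      ∀ i ≤ canonIdx D u, ∀ v, LT D i x v ↔ LT D i (suc D u) v := by
  induction n with
  | zero =>
    rintro x hx rfl
    refine ⟨le_rfl, fun i hi v => ?_⟩
    obtain ⟨f1, f2, f3, f4, f5, f6, f7, f8⟩ := canon_facts D hD x hx hu
    exact LT_append D i x _ _ v f8 (f6 i hi)
  | succ n ih =>
    intro x hx h
    rw [Function.iterate_succ_apply] at h
    have hsx : 1 < (suc D x).length := by
      by_contra hc
      rw [iter_atomic D hD _ (by omega)] at h
      rw [h] at hc; exact hc hu
    have hxl : 1 < x.length := by
      by_contra hc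
      rw [suc_atomic D hD x (by omega)] at hsx
      exact hc hsx
    obtain ⟨f1, f2, f3, f4, f5, f6, f7, f8⟩ := canon_facts D hD x hx hxl
    have hsc := suc_canonical D hD x hx
    obtain ⟨h1, h2⟩ := ih _ hsc h
    have hlt : canonIdx D (suc D x) < canonIdx D x := by
      by_contra hc
      have h3 := phiK_stab D _ _ _ (not_lt.1 hc) f5
      have h4 := (canon_facts D hD _ hsc hsx).1
      rw [h3] at h4
      simp at h4
    refine ⟨by omega, fun i hi v => ?_⟩
    rw [← h2 i hi v]
    exact LT_append D i x _ _ v f8 (f6 i (by omega))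

theorem iter_canonical (D : Dict α) (hD : ValidDict D) (x : Token α) (hx : IsCanonical D x)
    (n : ℕ) : IsCanonical D ((suc D)^[n] x) := by
  induction n with
  | zero => exact hx
  | succ n ih => rw [Function.iterate_succ_apply']; exact suc_canonical D hD _ ih

/-- Existence of the child of `t` on the path. -/
theorem exists_child (D : Dict α) (hD : ValidDict D) (x t : Token α) (hx : IsCanonical D x)
    (h : InPath D x t) (hne : x ≠ t) : ∃ u, 1 < u.length ∧ IsCanonical D u ∧ suc D u = t ∧
      InPath D x u := by
  classical
  have h' : ∃ n, (suc D)^[n] x = t := h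
  have hsp := Nat.find_spec h'
  have hmin := @Nat.find_min _ _ h'
  generalize Nat.find h' = n at *
  cases n with
  | zero => exact absurd hsp hne
  | succ n =>
    rw [Function.iterate_succ_apply'] at hsp
    refine ⟨(suc D)^[n] x, ?_, iter_canonical D hD x hx n, hsp, n, rfl⟩
    by_contra hc
    rw [suc_atomic D hD _ (by omega)] at hsp
    exact hmin (m := n) (by omega) hsp

/-- A path token occurs as the last token right after its canonical rule. -/
theorem LT_of_path (D : Dict α) (hD : ValidDict D) (x u : Token α) (hx : IsCanonical D x)
    (hu : 1 < u.length) (huc : IsCanonical D u) (h : InPath D x u) :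
    LT D (canonIdx D u + 1) x u := by
  have f2 := (canon_facts D hD u huc hu).2.1
  by_cases hne : x = u
  · subst hne; exact LT_self D _ _ f2
  · obtain ⟨w, w1, w2, w3, n, hn⟩ := exists_child D hD x u hx h hne
    have h2 := (path_LT D hD w w1 n x hx hn).2
    obtain ⟨g1, g2, g3, g4, g5, g6, g7, g8⟩ := canon_facts D hD w w2 w1
    rw [w3] at h2 g5
    refine (h2 _ ?_ u).2 (LT_self D _ _ f2)
    by_contra hc
    have h3 := phiK_stab D _ _ (canonIdx D u) (by omega) g5
    rw [(canon_facts D hD u huc hu).1] at h3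
    simp at h3

theorem phiK_prefix_head (D : Dict α) (hD : ValidDict D) (p q e : List α) (N : ℕ)
    (h1 : ∀ i ≤ N + 1, phiK D i (p ++ q) = phiK D i p ++ phiK D i q)
    (h2 : ∀ i ≤ N, ∃ a Q Q', phiK D i q = a :: Q ∧ phiK D i e = a :: Q') :
    ∀ i ≤ N + 1, phiK D i (p ++ e) = phiK D i p ++ phiK D i e := by
  intro i
  induction i with
  | zero => intro _; simp [phiK_zero, phi0]
  | succ i ih =>
    intro hi
    have ih := ih (by omega)
    have h3 := h1 (i+1) hi
    rcases phiK_succ D i with ⟨r, hr, hh⟩ | hh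
    · rw [hh, hh p, hh e, ih]
      rw [hh, hh p, hh q, h1 i (by omega)] at h3
      obtain ⟨a, Q, Q', hQ, hQ'⟩ := h2 i (by omega)
      rw [hQ] at h3
      rw [hQ']
      exact applyRule_head r (hD r hr).2 a Q _ h3 _
    · rw [hh, hh p, hh e, ih]

/-- **Monotonic Path Property.** Let `s` be a nonempty string and `k` the longest
canonical suffix token of `s`. A node `t` of `SufSucTree(k)` (a canonical suffix of `k`)
satisfies the Prefix Last-Token Condition with respect to `s` if and only if `t` lies
on the ancestor path `P(θ(s))` from the last token `θ(s)` to the root. -/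
theorem monotonic_path_property [Fintype α] (D : Dict α) (hD : ValidDict D)
    (s : List α) (hs : s ≠ [])
    (k : Token α) (hk1 : IsCanonical D k) (hk2 : k <:+ s)
    (hk3 : ∀ k' : Token α, IsCanonical D k' → k' <:+ s → k'.length ≤ k.length)
    (t : Token α) (htc : IsCanonical D t) (hts : t <:+ k) :
    PLTC D s t ↔ InPath D (theta D s) t := by
  obtain ⟨q, hq⟩ := hts.trans hk2
  obtain ⟨thc, thL⟩ := theta_spec D hD s hs
  have hpos := List.length_pos_iff.2 (canonical_ne D hD t htc)
  by_cases hl : 1 < t.length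
  swap
  · have h1 : t.length = 1 := by omega
    refine ⟨fun _ => ?_, fun _ => Or.inl h1⟩
    refine inPath_of_LT D hD 0 t _ _ rfl thc ((thL 0 t (by omega)).1 ?_)
    refine (LT_append D 0 s q t t (canonical_ne D hD t htc) ?_).2 (LT_self D _ _ (LT_atomic D 0 t h1))
    rw [← hq]; simp [phiK_zero, phi0]
  obtain ⟨f1, f2, f3, f4, f5, f6, f7, f8⟩ := canon_facts D hD t htc hl
  have hcl := (canonIdx_spec D t htc hl).1
  have hds : dropSuffix s (suc D t) = q ++ pre D t := by
    have : s = (q ++ pre D t) ++ suc D t := by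
      rw [← hq, List.append_assoc, ← f3]
    rw [dropSuffix, this, List.length_append, Nat.add_sub_cancel, List.take_left]
  have hs' : q ++ pre D t ≠ [] := by simp [f7]
  obtain ⟨thc', thL'⟩ := theta_spec D hD (q ++ pre D t) hs'
  rw [PLTC, hds]
  generalize hth' : theta D (q ++ pre D t) = th' at *
  generalize hth : theta D s = th at *
  have hpc1 := phiK_stab D _ _ (canonIdx D t + 1) (by omega) f4
  have hhead : ∀ i ≤ canonIdx D t, ∃ a Q Q',
      phiK D i (pre D t) = a :: Q ∧ phiK D i t = a :: Q' := by
    intro i hi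
    obtain ⟨a, Q, hQ⟩ := List.exists_cons_of_ne_nil (phiK_ne_nil D i _ f7)
    exact ⟨a, Q, Q ++ phiK D i (suc D t), hQ, by rw [f6 i hi, hQ]; rfl⟩
  constructor
  · rintro (h | ⟨_, hr, hp⟩)
    · omega
    have hLT : LT D (canonIdx D t + 1) th' (pre D t) := by
      by_cases hne : th' = pre D t
      · rw [hne]; exact LT_self D _ _ hpc1
      · obtain ⟨u, u1, u2, u3, n, hn⟩ := exists_child D hD th' _ thc' hr hne
        have hlt := hp hne u u1 u2 u3 ⟨n, hn⟩
        refine ((path_LT D hD u u1 n th' thc' hn).2 _ hlt _).2 ?_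
        rw [u3]
        exact LT_self D _ _ hpc1
    obtain ⟨A, hA⟩ := (thL' _ _ hcl).2 hLT
    obtain ⟨p, e1, e2, e3, e4⟩ := phiK_split_last D _ _ A _ hA
    obtain rfl := List.append_cancel_right e1
    have := phiK_prefix_head D hD q (pre D t) t (canonIdx D t) e4
      hhead _ le_rfl
    rw [hq, f2] at this
    exact inPath_of_LT D hD _ t _ _ rfl thc ((thL _ t hcl).1 ⟨_, this⟩)
  · intro h
    have hLT := LT_of_path D hD th t thc hl htc h
    obtain ⟨A, hA⟩ := (thL _ _ hcl).2 hLT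
    obtain ⟨p, e1, e2, e3, e4⟩ := phiK_split_last D _ _ A _ hA
    rw [← hq] at e1
    obtain rfl := List.append_cancel_right e1
    rw [← hq] at e4
    have key := phiK_prefix_head D hD q t (pre D t) (canonIdx D t) e4
      (fun i hi => by
        obtain ⟨a, Q, Q', h1, h2⟩ := hhead i hi
        exact ⟨a, Q', Q, h2, h1⟩) _ le_rfl
    rw [hpc1] at key
    have hL' : LT D (canonIdx D t + 1) th' (pre D t) := (thL' _ _ hcl).1 ⟨_, key⟩
    refine Or.inr ⟨hl, inPath_of_LT D hD _ _ _ _ rfl thc' hL', ?_⟩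
    intro _ u u1 u2 u3 u4
    by_contra hc
    have h5 := LT_of_path D hD th' u thc' u1 u2 u4
    have h6 := LT_mono D hD _ _ (by omega) th' _ _ h5 hL'
    obtain ⟨g1, g2, g3, g4, g5, g6, g7, g8⟩ := canon_facts D hD u u2 u1
    have h7 := congrArg List.length g3
    have h8 := List.length_pos_iff.2 g7
    rw [List.length_append, u3] at h7
    omega

end BPE
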